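/- Let u be a monotone traveling wave solution of the balanced Allen-Cahn equation in the plane, and assume u and its derivatives up to third order are bounded. Then ∂u/∂y(x,y) → 0 as |x| → ∞ uniformly in y: for every ε > 0 there exists R > 0 such that |∂u/∂y(x,y)| < ε whenever |x| ≥ R and y ∈ ℝ. -/

import Mathlib

open Real Filter MeasureTheory Metric

noncomputable def pdx (u : ℝ → ℝ → ℝ) (x y : ℝ) : ℝ := deriv (fun t => u t y) x

noncomputable def pdy (u : ℝ → ℝ → ℝ) (x y : ℝ) : ℝ := deriv (fun t => u x t) y

noncomputable def pdxx (u : ℝ → ℝ → ℝ) (x y : ℝ) : ℝ := deriv (fun t => pdx u t y) x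

noncomputable def pdyy (u : ℝ → ℝ → ℝ) (x y : ℝ) : ℝ := deriv (fun t => pdy u x t) y

/-- `F` is a balanced double-well potential. -/
def BalancedDoubleWell (F : ℝ → ℝ) : Prop :=
  ContDiff ℝ 3 F ∧ deriv F (-1) = 0 ∧ deriv F 1 = 0 ∧
  0 < deriv (deriv F) (-1) ∧ 0 < deriv (deriv F) 1 ∧
  (∀ s ∈ Set.Ioo (-1 : ℝ) 0, 0 < deriv F s) ∧
  (∀ s ∈ Set.Ioo (0 : ℝ) 1, deriv F s < 0) ∧
  F (-1) = 0 ∧ F 1 = 0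

/-- `u` is a `C³` solution of `Δu + c uᵧ = F'(u)` on `ℝ²` with `|u| ≤ 1`
which is monotone in `y`. -/
def IsSolution (F : ℝ → ℝ) (c : ℝ) (u : ℝ → ℝ → ℝ) : Prop :=
  ContDiff ℝ 3 (fun p : ℝ × ℝ => u p.1 p.2) ∧
  (∀ x y : ℝ, pdxx u x y + pdyy u x y + c * pdy u x y = deriv F (u x y)) ∧
  (∀ x y : ℝ, |u x y| ≤ 1) ∧
  (∀ x y : ℝ, 0 < pdy u x y)

/-- A monotone traveling wave solution connecting `-1` to `1`. -/
def IsTravelingWave (F : ℝ → ℝ) (c : ℝ) (u : ℝ → ℝ → ℝ) : Prop :=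
  IsSolution F c u ∧
  (∀ x : ℝ, Tendsto (fun y => u x y) atTop (nhds 1)) ∧
  (∀ x : ℝ, Tendsto (fun y => u x y) atBot (nhds (-1)))

/-!
Multiplying `Δu + c uᵧ = F'(u)` by `uᵧ` writes `c uᵧ²` as the divergence of the field with
components `-uₓ uᵧ` and `uₓ² / 2 - uᵧ² / 2 + F(u)`. On a rectangle, the flux through the vertical
sides is at most `sup |uₓ| * ∫ uᵧ`, which monotonicity bounds by `sup |uₓ|` times the oscillation of
`u`; the fluxes through the horizontal sides cancel in the limit, because `∇u → 0` as `y → ±∞` and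
both wells have the same depth. Hence `uᵧ` is square integrable over the plane, and a uniformly
continuous square integrable function vanishes at infinity.
-/

section VanishingAtInfinity

variable {E E' G : Type*} [NormedAddCommGroup E] [NormedAddCommGroup E'] [NormedAddCommGroup G]

theorem tendsto_cocompact_zero_of_uniformContinuous_of_memLp [ProperSpace E] [MeasurableSpace E]
    [BorelSpace E] {μ : Measure E} [μ.IsAddLeftInvariant] [μ.IsOpenPosMeasure] {f : E → G}
    {p : ENNReal} (hf : UniformContinuous f) (hfp : MemLp f p μ) (hp0 : p ≠ 0) (hp : p ≠ ⊤) :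
    Tendsto f (cocompact E) (nhds 0) := by
  rw [Metric.tendsto_nhds]
  intro ε hε
  obtain ⟨r, hr, hfr⟩ := Metric.uniformContinuous_iff.1 hf (ε / 2) (by positivity)
  let S : Set E := {q | (ε / 2).toNNReal ≤ ‖f q‖₊}
  have : IsFiniteMeasure (μ.restrict S) :=
    isFiniteMeasure_restrict.2 (hfp.meas_ge_lt_top hp0 hp (by simpa using hε)).ne
  obtain ⟨δ, hδ, hδr⟩ := exists_between (measure_ball_pos μ (0 : E) hr)
  obtain ⟨K, hK, hμK⟩ := isTightMeasureSet_iff_exists_isCompact_measure_compl_le.1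
    (isTightMeasureSet_singleton (μ := μ.restrict S)) δ hδ
  filter_upwards [(hK.cthickening (r := r)).compl_mem_cocompact] with x hx
  by_contra! hfx
  rw [dist_zero_right] at hfx
  have hball_compl : ball x r ⊆ Kᶜ := fun y hy hyK =>
    hx (mem_cthickening_of_dist_le x y r K hyK (mem_ball'.1 hy).le)
  have hball_large : ball x r ⊆ S := fun y hy => by
    have hxy : dist (f x) (f y) < ε / 2 := hfr (mem_ball'.1 hy)
    rw [dist_eq_norm] at hxy
    have := norm_sub_norm_le (f x) (f y)
    exact Real.toNNReal_le_iff_le_coe.2 (by rw [coe_nnnorm]; linarith)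
  have hball_measure : μ (ball x r) = μ (ball 0 r) := by
    rw [← measure_preimage_add μ x (ball x r), preimage_add_ball, sub_self]
  refine hδr.not_ge ?_
  calc μ (ball 0 r) = μ (ball x r ∩ S) := by
        rw [Set.inter_eq_left.2 hball_large, hball_measure]
    _ = μ.restrict S (ball x r) := (Measure.restrict_apply measurableSet_ball).symm
    _ ≤ μ.restrict S Kᶜ := measure_mono hball_compl
    _ ≤ δ := hμK _ rfl

theorem exists_forall_norm_lt_of_tendsto_cocompact_prod [ProperSpace E] [ProperSpace E']
    {f : E × E' → G} (hf : Tendsto f (cocompact (E × E')) (nhds 0)) :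
    ∀ ε > (0 : ℝ), ∃ R > (0 : ℝ), ∀ x y, R ≤ ‖x‖ → ‖f (x, y)‖ < ε := by
  intro ε hε
  obtain ⟨R, hR⟩ := (mem_cocompact_iff_closedBall_compl_subset 0).1
    (hf.norm.eventually_lt_const (by simpa using hε))
  refine ⟨max R 0 + 1, by positivity, fun x y hx => hR ?_⟩
  rw [Set.mem_compl_iff, mem_closedBall_zero_iff, not_le]
  linarith [le_max_left R 0, norm_fst_le (x, y)]

end VanishingAtInfinity

section LipschitzDerivative

variable {E G : Type*} [NormedAddCommGroup E] [NormedSpace ℝ E] [NormedAddCommGroup G]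
  [NormedSpace ℝ G] {f : E → G} {K : NNReal}

theorem contDiff_fderiv_apply_const {m n : WithTop ℕ∞} (hf : ContDiff ℝ n f) (hmn : m + 1 ≤ n)
    (v : E) : ContDiff ℝ m fun x => fderiv ℝ f x v :=
  (hf.fderiv_right hmn).clm_apply contDiff_const

theorem differentiable_fderiv_of_contDiff_two (hf : ContDiff ℝ 2 f) :
    Differentiable ℝ (fderiv ℝ f) :=
  (hf.fderiv_right (m := 1) one_add_one_eq_two.le).differentiable one_ne_zero

theorem lipschitzWith_fderiv_of_norm_iteratedFDeriv_two_le (hf : ContDiff ℝ 2 f) {M : ℝ}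
    (hM : ∀ x, ‖iteratedFDeriv ℝ 2 f x‖ ≤ M) : LipschitzWith M.toNNReal (fderiv ℝ f) := by
  refine lipschitzWith_of_nnnorm_fderiv_le (differentiable_fderiv_of_contDiff_two hf) fun x => ?_
  rw [Real.le_toNNReal_iff_coe_le ((norm_nonneg _).trans (hM x)), coe_nnnorm,
    ← norm_iteratedFDeriv_one, norm_iteratedFDeriv_fderiv]
  exact hM x

theorem norm_fderiv_apply_le_of_lipschitzWith (hf : Differentiable ℝ f)
    (hK : LipschitzWith K (fderiv ℝ f)) (x v : E) :
    ‖fderiv ℝ f x v‖ ≤ ‖f (x + v) - f x‖ + K * ‖v‖ ^ 2 := by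
  have htaylor : ‖f (x + v) - f x - fderiv ℝ f x (x + v - x)‖ ≤ K * ‖v‖ * ‖x + v - x‖ := by
    refine (convex_closedBall x ‖v‖).norm_image_sub_le_of_norm_fderiv_le' (𝕜 := ℝ)
      (fun y _ => hf y) (fun y hy => ?_) (mem_closedBall_self (norm_nonneg v)) (by simp)
    rw [← dist_eq_norm]
    exact (hK.dist_le_mul y x).trans (by gcongr; exact hy)
  rw [add_sub_cancel_left] at htaylor
  calc ‖fderiv ℝ f x v‖ ≤ ‖f (x + v) - f x‖ + ‖f (x + v) - f x - fderiv ℝ f x v‖ :=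
        norm_le_norm_add_norm_sub _ _
    _ ≤ ‖f (x + v) - f x‖ + K * ‖v‖ ^ 2 := by rw [sq, ← mul_assoc]; gcongr

theorem tendsto_fderiv_apply_zero_of_tendsto_sub (hf : Differentiable ℝ f)
    (hK : LipschitzWith K (fderiv ℝ f)) {ι : Type*} {l : Filter ι} {x : ι → E} {v : E}
    (h : ∀ t : ℝ, Tendsto (fun i => f (x i + t • v) - f (x i)) l (nhds 0)) :
    Tendsto (fun i => fderiv ℝ f (x i) v) l (nhds 0) := by
  rw [Metric.tendsto_nhds]
  intro ε hε
  obtain ⟨t, ht, htε⟩ : ∃ t : ℝ, 0 < t ∧ K * ‖v‖ ^ 2 * t < ε / 2 :=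
    exists_pos_mul_lt (by positivity) _
  filter_upwards [Metric.tendsto_nhds.1 (h t) (t * (ε / 2)) (by positivity)] with i hi
  rw [dist_zero_right] at hi ⊢
  refine lt_of_mul_lt_mul_left ?_ ht.le
  calc t * ‖fderiv ℝ f (x i) v‖ = ‖fderiv ℝ f (x i) (t • v)‖ := by
        rw [map_smul, norm_smul, Real.norm_of_nonneg ht.le]
    _ ≤ ‖f (x i + t • v) - f (x i)‖ + K * ‖t • v‖ ^ 2 :=
        norm_fderiv_apply_le_of_lipschitzWith hf hK (x i) (t • v)
    _ = ‖f (x i + t • v) - f (x i)‖ + t * (K * ‖v‖ ^ 2 * t) := by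
        rw [norm_smul, Real.norm_of_nonneg ht.le]; ring
    _ < t * (ε / 2) + t * (ε / 2) := by gcongr
    _ = t * ε := by ring

theorem abs_fderiv_apply_le_of_mem_Icc {f : E → ℝ} {a b : ℝ} (hf : Differentiable ℝ f)
    (hK : LipschitzWith K (fderiv ℝ f)) (hfab : ∀ x, f x ∈ Set.Icc a b) (x : E) {v : E}
    (hv : ‖v‖ ≤ 1) : |fderiv ℝ f x v| ≤ b - a + K := by
  have hosc : ‖f (x + v) - f x‖ ≤ b - a := Real.dist_le_of_mem_Icc (hfab _) (hfab _)
  calc |fderiv ℝ f x v| ≤ ‖f (x + v) - f x‖ + K * ‖v‖ ^ 2 :=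
        norm_fderiv_apply_le_of_lipschitzWith hf hK x v
    _ ≤ b - a + K * 1 ^ 2 := by gcongr
    _ = b - a + K := by ring

theorem fderiv_fderiv_apply {x : E} (hf : DifferentiableAt ℝ (fderiv ℝ f) x) (v w : E) :
    fderiv ℝ (fun y => fderiv ℝ f y v) x w = fderiv ℝ (fderiv ℝ f) x w v := by
  rw [fderiv_clm_apply hf (differentiableAt_const v)]
  simp

end LipschitzDerivative

section PartialDerivatives

variable {U : ℝ × ℝ → ℝ}

theorem hasDerivAt_comp_prodMk_left {x y : ℝ} (hU : DifferentiableAt ℝ U (x, y)) :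
    HasDerivAt (fun t => U (t, y)) (fderiv ℝ U (x, y) (1, 0)) x :=
  hU.hasFDerivAt.comp_hasDerivAt x ((hasDerivAt_id x).prodMk (hasDerivAt_const x y))

theorem hasDerivAt_comp_prodMk_right {x y : ℝ} (hU : DifferentiableAt ℝ U (x, y)) :
    HasDerivAt (fun t => U (x, t)) (fderiv ℝ U (x, y) (0, 1)) y :=
  hU.hasFDerivAt.comp_hasDerivAt y ((hasDerivAt_const y x).prodMk (hasDerivAt_id y))

variable {u : ℝ → ℝ → ℝ}

theorem pdx_eq_fderiv (hu : Differentiable ℝ fun q : ℝ × ℝ => u q.1 q.2) (x y : ℝ) :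
    pdx u x y = fderiv ℝ (fun q : ℝ × ℝ => u q.1 q.2) (x, y) (1, 0) :=
  (hasDerivAt_comp_prodMk_left (hu (x, y))).deriv

theorem pdy_eq_fderiv (hu : Differentiable ℝ fun q : ℝ × ℝ => u q.1 q.2) (x y : ℝ) :
    pdy u x y = fderiv ℝ (fun q : ℝ × ℝ => u q.1 q.2) (x, y) (0, 1) :=
  (hasDerivAt_comp_prodMk_right (hu (x, y))).deriv

theorem pdxx_eq_fderiv_fderiv (hu : ContDiff ℝ 2 fun q : ℝ × ℝ => u q.1 q.2) (x y : ℝ) :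
    pdxx u x y = fderiv ℝ (fderiv ℝ fun q : ℝ × ℝ => u q.1 q.2) (x, y) (1, 0) (1, 0) := by
  have hdx := contDiff_fderiv_apply_const hu one_add_one_eq_two.le (1, 0)
  simp only [pdxx, pdx_eq_fderiv (hu.differentiable two_ne_zero)]
  rw [← fderiv_fderiv_apply (differentiable_fderiv_of_contDiff_two hu _)]
  exact (hasDerivAt_comp_prodMk_left (hdx.differentiable one_ne_zero (x, y))).deriv

theorem pdyy_eq_fderiv_fderiv (hu : ContDiff ℝ 2 fun q : ℝ × ℝ => u q.1 q.2) (x y : ℝ) :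
    pdyy u x y = fderiv ℝ (fderiv ℝ fun q : ℝ × ℝ => u q.1 q.2) (x, y) (0, 1) (0, 1) := by
  have hdy := contDiff_fderiv_apply_const hu one_add_one_eq_two.le (0, 1)
  simp only [pdyy, pdy_eq_fderiv (hu.differentiable two_ne_zero)]
  rw [← fderiv_fderiv_apply (differentiable_fderiv_of_contDiff_two hu _)]
  exact (hasDerivAt_comp_prodMk_right (hdy.differentiable one_ne_zero (x, y))).deriv

theorem mem_Icc_of_fderiv_nonneg_of_tendsto {a b : ℝ} (hU : Differentiable ℝ U)
    (hmono : ∀ p, 0 ≤ fderiv ℝ U p (0, 1))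
    (htop : ∀ x, Tendsto (fun y => U (x, y)) atTop (nhds b))
    (hbot : ∀ x, Tendsto (fun y => U (x, y)) atBot (nhds a)) (p : ℝ × ℝ) :
    U p ∈ Set.Icc a b := by
  have hderiv := fun y => hasDerivAt_comp_prodMk_right (hU (p.1, y))
  have hline : Monotone fun y => U (p.1, y) :=
    monotone_of_deriv_nonneg (fun y => (hderiv y).differentiableAt)
      fun y => (hderiv y).deriv ▸ hmono (p.1, y)
  exact ⟨hline.le_of_tendsto (hbot p.1) p.2, hline.ge_of_tendsto (htop p.1) p.2⟩

end PartialDerivatives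

section Flux

/-- The travelling wave equation `ΔU + c Uᵧ = F'(U)` for a function on the plane, with partial
derivatives encoded as Fréchet derivatives in the coordinate directions. -/
def SolvesWaveEquation (F : ℝ → ℝ) (c : ℝ) (U : ℝ × ℝ → ℝ) : Prop :=
  ∀ p, fderiv ℝ (fderiv ℝ U) p (1, 0) (1, 0) + fderiv ℝ (fderiv ℝ U) p (0, 1) (0, 1)
    + c * fderiv ℝ U p (0, 1) = deriv F (U p)

/-- First component `-Uₓ Uᵧ` of the flux field, whose divergence is `c Uᵧ²` for solutions of the
travelling wave equation. -/
noncomputable def horizontalFlux (U : ℝ × ℝ → ℝ) (p : ℝ × ℝ) : ℝ :=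
  -(fderiv ℝ U p (1, 0) * fderiv ℝ U p (0, 1))

/-- Second component `Uₓ² / 2 - Uᵧ² / 2 + F(U)` of the flux field, whose divergence is `c Uᵧ²` for
solutions of the travelling wave equation. -/
noncomputable def verticalFlux (F : ℝ → ℝ) (U : ℝ × ℝ → ℝ) (p : ℝ × ℝ) : ℝ :=
  fderiv ℝ U p (1, 0) ^ 2 / 2 - fderiv ℝ U p (0, 1) ^ 2 / 2 + F (U p)

variable {F : ℝ → ℝ} {U : ℝ × ℝ → ℝ} {a b c : ℝ} {K : NNReal}

theorem contDiff_horizontalFlux {m n : WithTop ℕ∞} (hU : ContDiff ℝ n U) (hmn : m + 1 ≤ n) :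
    ContDiff ℝ m (horizontalFlux U) :=
  ((contDiff_fderiv_apply_const hU hmn (1, 0)).mul (contDiff_fderiv_apply_const hU hmn (0, 1))).neg

theorem contDiff_verticalFlux {m n : WithTop ℕ∞} (hF : ContDiff ℝ m F) (hU : ContDiff ℝ n U)
    (hmn : m + 1 ≤ n) : ContDiff ℝ m (verticalFlux F U) :=
  ((((contDiff_fderiv_apply_const hU hmn (1, 0)).pow 2).div_const 2).sub
    (((contDiff_fderiv_apply_const hU hmn (0, 1)).pow 2).div_const 2)).add
    (hF.comp (hU.of_le (le_self_add.trans hmn)))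

theorem fderiv_horizontalFlux_apply (hU : ContDiff ℝ 2 U) (p v : ℝ × ℝ) :
    fderiv ℝ (horizontalFlux U) p v = -(fderiv ℝ (fderiv ℝ U) p v (1, 0) * fderiv ℝ U p (0, 1) +
      fderiv ℝ U p (1, 0) * fderiv ℝ (fderiv ℝ U) p v (0, 1)) := by
  have hDU := differentiable_fderiv_of_contDiff_two hU
  unfold horizontalFlux
  rw [fderiv_fun_neg, fderiv_fun_mul (by fun_prop) (by fun_prop)]
  simp only [add_apply, neg_apply, smul_apply, fderiv_fderiv_apply (hDU p), smul_eq_mul]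
  ring

theorem fderiv_verticalFlux_apply (hF : Differentiable ℝ F) (hU : ContDiff ℝ 2 U) (p v : ℝ × ℝ) :
    fderiv ℝ (verticalFlux F U) p v = fderiv ℝ U p (1, 0) * fderiv ℝ (fderiv ℝ U) p v (1, 0) -
      fderiv ℝ U p (0, 1) * fderiv ℝ (fderiv ℝ U) p v (0, 1) + deriv F (U p) * fderiv ℝ U p v := by
  have hDU := differentiable_fderiv_of_contDiff_two hU
  have hsq : ∀ w, HasFDerivAt (fun q => fderiv ℝ U q w ^ 2 / 2)
      (fderiv ℝ U p w • (fderiv ℝ (fderiv ℝ U) p).flip w) p := fun w => by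
    have h := ((hDU p).hasFDerivAt.clm_apply (hasFDerivAt_const w p)).pow 2 |>.const_mul (2⁻¹ : ℝ)
    simp only [div_eq_inv_mul]
    refine h.congr_fderiv (ContinuousLinearMap.ext fun v => ?_)
    simp [← mul_assoc]
  have hFU := (hF (U p)).hasDerivAt.comp_hasFDerivAt p (hU.differentiable two_ne_zero p).hasFDerivAt
  rw [HasFDerivAt.fderiv (f := verticalFlux F U) (((hsq (1, 0)).sub (hsq (0, 1))).add hFU)]
  rfl

theorem SolvesWaveEquation.divergence_flux (heq : SolvesWaveEquation F c U)
    (hF : Differentiable ℝ F) (hU : ContDiff ℝ 2 U) (p : ℝ × ℝ) :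
    fderiv ℝ (horizontalFlux U) p (1, 0) + fderiv ℝ (verticalFlux F U) p (0, 1) =
      c * fderiv ℝ U p (0, 1) ^ 2 := by
  have hsymm : fderiv ℝ (fderiv ℝ U) p (1, 0) (0, 1) = fderiv ℝ (fderiv ℝ U) p (0, 1) (1, 0) :=
    (hU.contDiffAt (x := p)).isSymmSndFDerivAt (by simp) (1, 0) (0, 1)
  rw [fderiv_horizontalFlux_apply hU, fderiv_verticalFlux_apply hF hU, hsymm, ← heq p]
  ring

theorem SolvesWaveEquation.mul_setIntegral_sq_fderiv_eq (heq : SolvesWaveEquation F c U)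
    (hF : ContDiff ℝ 1 F) (hU : ContDiff ℝ 2 U) {x₁ x₂ y₁ y₂ : ℝ} (hx : x₁ ≤ x₂) (hy : y₁ ≤ y₂) :
    c * ∫ p in Set.Icc (x₁, y₁) (x₂, y₂), fderiv ℝ U p (0, 1) ^ 2 =
      (((∫ x in x₁..x₂, verticalFlux F U (x, y₂)) - ∫ x in x₁..x₂, verticalFlux F U (x, y₁)) +
        ∫ y in y₁..y₂, horizontalFlux U (x₂, y)) - ∫ y in y₁..y₂, horizontalFlux U (x₁, y) := by
  have hhor := contDiff_horizontalFlux hU one_add_one_eq_two.le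
  have hver := contDiff_verticalFlux hF hU one_add_one_eq_two.le
  have hdy := (contDiff_fderiv_apply_const hU one_add_one_eq_two.le (0, 1)).continuous
  rw [← integral_const_mul]
  simp only [← heq.divergence_flux (hF.differentiable one_ne_zero) hU]
  refine integral_divergence_prod_Icc_of_hasFDerivAt_of_le _ _ _ _ (x₁, y₁) (x₂, y₂) ⟨hx, hy⟩
    hhor.continuous.continuousOn hver.continuous.continuousOn
    (fun p _ => (hhor.differentiable one_ne_zero p).hasFDerivAt)
    (fun p _ => (hver.differentiable one_ne_zero p).hasFDerivAt) ?_
  simp only [heq.divergence_flux (hF.differentiable one_ne_zero) hU]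
  exact ((hdy.pow 2).const_mul c).integrableOn_Icc

theorem abs_integral_horizontalFlux_le (hU : ContDiff ℝ 1 U)
    (hmono : ∀ p, 0 ≤ fderiv ℝ U p (0, 1)) {M : ℝ} (hM : ∀ p, |fderiv ℝ U p (1, 0)| ≤ M) (x : ℝ)
    {s t : ℝ} (hst : s ≤ t) :
    |∫ y in s..t, horizontalFlux U (x, y)| ≤ M * (U (x, t) - U (x, s)) := by
  have hdy : Continuous fun y => fderiv ℝ U (x, y) (0, 1) :=
    (contDiff_fderiv_apply_const hU (zero_add 1).le (0, 1)).continuous.comp (.prodMk_right x)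
  have hpointwise : ∀ y, ‖horizontalFlux U (x, y)‖ ≤ M * fderiv ℝ U (x, y) (0, 1) := fun y => by
    rw [horizontalFlux, norm_neg, norm_mul, Real.norm_of_nonneg (hmono _)]
    exact mul_le_mul_of_nonneg_right (hM _) (hmono _)
  calc |∫ y in s..t, horizontalFlux U (x, y)| ≤ ∫ y in s..t, M * fderiv ℝ U (x, y) (0, 1) :=
        intervalIntegral.norm_integral_le_of_norm_le hst (ae_of_all _ fun y _ => hpointwise y)
          ((hdy.const_mul M).intervalIntegrable s t)
    _ = M * (U (x, t) - U (x, s)) := by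
        rw [intervalIntegral.integral_const_mul, intervalIntegral.integral_eq_sub_of_hasDerivAt
          (fun y _ => hasDerivAt_comp_prodMk_right (hU.differentiable one_ne_zero (x, y)))
          (hdy.intervalIntegrable s t)]

theorem exists_forall_norm_verticalFlux_le (hF : Continuous F) (hU : Differentiable ℝ U)
    (hK : LipschitzWith K (fderiv ℝ U)) (hUab : ∀ p, U p ∈ Set.Icc a b) :
    ∃ B, ∀ p, ‖verticalFlux F U p‖ ≤ B := by
  obtain ⟨B, hB⟩ := isCompact_Icc.exists_bound_of_continuousOn (s := Set.Icc a b) hF.continuousOn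
  have hsq : ∀ p v, ‖v‖ ≤ 1 → ‖fderiv ℝ U p v ^ 2 / 2‖ ≤ (b - a + K) ^ 2 / 2 := fun p v hv => by
    rw [norm_div, norm_pow, Real.norm_ofNat]
    gcongr
    exact abs_fderiv_apply_le_of_mem_Icc hU hK hUab p hv
  refine ⟨(b - a + K) ^ 2 / 2 + (b - a + K) ^ 2 / 2 + B, fun p => ?_⟩
  exact norm_add_le_of_le (norm_sub_le_of_le (hsq p _ (by simp)) (hsq p _ (by simp)))
    (hB _ (hUab p))

theorem tendsto_verticalFlux {ι : Type*} {l : Filter ι} {p : ι → ℝ × ℝ} {s : ℝ}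
    (hF : ContinuousAt F s) (hU : Differentiable ℝ U) (hK : LipschitzWith K (fderiv ℝ U))
    (h : ∀ v, Tendsto (fun i => U (p i + v)) l (nhds s)) :
    Tendsto (fun i => verticalFlux F U (p i)) l (nhds (F s)) := by
  have hUp : Tendsto (fun i => U (p i)) l (nhds s) := by simpa using h 0
  have hgrad : ∀ v, Tendsto (fun i => fderiv ℝ U (p i) v) l (nhds 0) := fun v =>
    tendsto_fderiv_apply_zero_of_tendsto_sub hU hK fun t => by simpa using (h (t • v)).sub hUp
  have hsq : ∀ v, Tendsto (fun i => fderiv ℝ U (p i) v ^ 2 / 2) l (nhds 0) := fun v => by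
    simpa using ((hgrad v).pow 2).div_const 2
  simpa [verticalFlux] using ((hsq (1, 0)).sub (hsq (0, 1))).add (hF.tendsto.comp hUp)

theorem tendsto_integral_verticalFlux (hF : Continuous F) (hU : ContDiff ℝ 1 U)
    (hK : LipschitzWith K (fderiv ℝ U)) (hUab : ∀ p, U p ∈ Set.Icc a b) {l : Filter ℝ}
    [l.IsCountablyGenerated] (hl : ∀ t, Tendsto (fun y => y + t) l l) {s : ℝ}
    (hs : ∀ x, Tendsto (fun y => U (x, y)) l (nhds s)) (x₁ x₂ : ℝ) :
    Tendsto (fun y => ∫ x in x₁..x₂, verticalFlux F U (x, y)) l (nhds ((x₂ - x₁) * F s)) := by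
  have hUd := hU.differentiable one_ne_zero
  obtain ⟨B, hB⟩ := exists_forall_norm_verticalFlux_le hF hUd hK hUab
  have hflux := (contDiff_verticalFlux (contDiff_zero.2 hF) hU (zero_add 1).le).continuous
  have hpointwise : ∀ x, Tendsto (fun y => verticalFlux F U (x, y)) l (nhds (F s)) := fun x =>
    tendsto_verticalFlux hF.continuousAt hUd hK fun v => (hs (x + v.1)).comp (hl v.2)
  rw [← smul_eq_mul, ← intervalIntegral.integral_const]
  exact intervalIntegral.tendsto_integral_filter_of_dominated_convergence (fun _ => B)
    (.of_forall fun y => Continuous.aestronglyMeasurable (by fun_prop))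
    (.of_forall fun y => ae_of_all _ fun x _ => hB (x, y)) (by simp)
    (ae_of_all _ fun x _ => hpointwise x)

theorem SolvesWaveEquation.abs_mul_setIntegral_sq_fderiv_le_add (heq : SolvesWaveEquation F c U)
    (hF : ContDiff ℝ 1 F) (hU : ContDiff ℝ 2 U) (hK : LipschitzWith K (fderiv ℝ U))
    (hmono : ∀ p, 0 ≤ fderiv ℝ U p (0, 1)) (hUab : ∀ p, U p ∈ Set.Icc a b)
    {x₁ x₂ y₁ y₂ : ℝ} (hx : x₁ ≤ x₂) (hy : y₁ ≤ y₂) :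
    |c| * ∫ p in Set.Icc (x₁, y₁) (x₂, y₂), fderiv ℝ U p (0, 1) ^ 2 ≤
      |(∫ x in x₁..x₂, verticalFlux F U (x, y₂)) - ∫ x in x₁..x₂, verticalFlux F U (x, y₁)| +
        2 * ((b - a + K) * (b - a)) := by
  have hdx : ∀ p, |fderiv ℝ U p (1, 0)| ≤ b - a + K := fun p =>
    abs_fderiv_apply_le_of_mem_Icc (hU.differentiable two_ne_zero) hK hUab p (by simp)
  have hside : ∀ x, |∫ y in y₁..y₂, horizontalFlux U (x, y)| ≤ (b - a + K) * (b - a) := fun x =>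
    (abs_integral_horizontalFlux_le (hU.of_le one_le_two) hmono hdx x hy).trans <|
      mul_le_mul_of_nonneg_left (sub_le_sub (hUab _).2 (hUab _).1) ((abs_nonneg _).trans (hdx 0))
  calc |c| * ∫ p in Set.Icc (x₁, y₁) (x₂, y₂), fderiv ℝ U p (0, 1) ^ 2
      = |c * ∫ p in Set.Icc (x₁, y₁) (x₂, y₂), fderiv ℝ U p (0, 1) ^ 2| := by
        rw [abs_mul, abs_of_nonneg (integral_nonneg fun p => sq_nonneg _)]
    _ ≤ |(∫ x in x₁..x₂, verticalFlux F U (x, y₂)) - ∫ x in x₁..x₂, verticalFlux F U (x, y₁)| +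
          (b - a + K) * (b - a) + (b - a + K) * (b - a) := by
        rw [heq.mul_setIntegral_sq_fderiv_eq hF hU hx hy]
        exact (abs_sub _ _).trans (add_le_add (abs_add_le _ _ |>.trans
          (add_le_add_right (hside x₂) _)) (hside x₁))
    _ = _ := by ring

theorem SolvesWaveEquation.abs_mul_setIntegral_sq_fderiv_le (heq : SolvesWaveEquation F c U)
    (hF : ContDiff ℝ 1 F) (hU : ContDiff ℝ 2 U) (hK : LipschitzWith K (fderiv ℝ U))
    (hmono : ∀ p, 0 ≤ fderiv ℝ U p (0, 1))
    (htop : ∀ x, Tendsto (fun y => U (x, y)) atTop (nhds b))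
    (hbot : ∀ x, Tendsto (fun y => U (x, y)) atBot (nhds a)) (hab : F a = F b)
    {x₁ x₂ : ℝ} (hx : x₁ ≤ x₂) (y₁ y₂ : ℝ) :
    |c| * ∫ p in Set.Icc (x₁, y₁) (x₂, y₂), fderiv ℝ U p (0, 1) ^ 2 ≤
      2 * ((b - a + K) * (b - a)) := by
  have hU1 : ContDiff ℝ 1 U := hU.of_le one_le_two
  have hUab := mem_Icc_of_fderiv_nonneg_of_tendsto (hU1.differentiable one_ne_zero) hmono htop hbot
  have hdy := (contDiff_fderiv_apply_const hU one_add_one_eq_two.le (0, 1)).continuous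
  have hup := tendsto_integral_verticalFlux hF.continuous hU1 hK hUab
    (fun t => tendsto_atTop_add_const_right _ t tendsto_id) htop x₁ x₂
  have hdown := tendsto_integral_verticalFlux hF.continuous hU1 hK hUab
    (fun t => tendsto_atBot_add_const_right _ t tendsto_id) hbot x₁ x₂
  have hlim : Tendsto (fun N => |(∫ x in x₁..x₂, verticalFlux F U (x, N)) -
      ∫ x in x₁..x₂, verticalFlux F U (x, -N)| + 2 * ((b - a + K) * (b - a))) atTop
      (nhds (2 * ((b - a + K) * (b - a)))) := by
    simpa [hab] using ((hup.sub (hdown.comp tendsto_neg_atTop_atBot)).abs.add_const _)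
  refine ge_of_tendsto hlim ?_
  filter_upwards [eventually_ge_atTop (-y₁), eventually_ge_atTop y₂, eventually_ge_atTop 0]
    with N hN₁ hN₂ hN
  have hsub : Set.Icc (x₁, y₁) (x₂, y₂) ⊆ Set.Icc (x₁, -N) (x₂, N) :=
    Set.Icc_subset_Icc ⟨le_rfl, neg_le.1 hN₁⟩ ⟨le_rfl, hN₂⟩
  calc |c| * ∫ p in Set.Icc (x₁, y₁) (x₂, y₂), fderiv ℝ U p (0, 1) ^ 2
      ≤ |c| * ∫ p in Set.Icc (x₁, -N) (x₂, N), fderiv ℝ U p (0, 1) ^ 2 :=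
        mul_le_mul_of_nonneg_left (setIntegral_mono_set (hdy.pow 2).integrableOn_Icc
          (ae_of_all _ fun p => sq_nonneg _) hsub.eventuallyLE) (abs_nonneg c)
    _ ≤ _ := heq.abs_mul_setIntegral_sq_fderiv_le_add hF hU hK hmono hUab hx (neg_le_self hN)

theorem SolvesWaveEquation.memLp_two_fderiv_apply (heq : SolvesWaveEquation F c U) (hc : c ≠ 0)
    (hF : ContDiff ℝ 1 F) (hU : ContDiff ℝ 2 U) (hK : LipschitzWith K (fderiv ℝ U))
    (hmono : ∀ p, 0 ≤ fderiv ℝ U p (0, 1))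
    (htop : ∀ x, Tendsto (fun y => U (x, y)) atTop (nhds b))
    (hbot : ∀ x, Tendsto (fun y => U (x, y)) atBot (nhds a)) (hab : F a = F b) :
    MemLp (fun p => fderiv ℝ U p (0, 1)) 2 := by
  have hdy := (contDiff_fderiv_apply_const hU one_add_one_eq_two.le (0, 1)).continuous
  have hcover : AECover (volume : Measure (ℝ × ℝ)) atTop
      fun A : ℝ => Set.Icc ((-A, -A) : ℝ × ℝ) (A, A) := by
    refine aecover_Icc ?_ ?_
    · rw [← prod_atBot_atBot_eq]
      exact tendsto_neg_atTop_atBot.prodMk tendsto_neg_atTop_atBot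
    · rw [← prod_atTop_atTop_eq]
      exact tendsto_id.prodMk tendsto_id
  refine (memLp_two_iff_integrable_sq hdy.aestronglyMeasurable).2 <|
    hcover.integrable_of_integral_bounded_of_nonneg_ae (2 * ((b - a + K) * (b - a)) / |c|)
      (fun A => (hdy.pow 2).integrableOn_Icc) (ae_of_all _ fun z => sq_nonneg _) ?_
  filter_upwards [eventually_ge_atTop 0] with A hA
  rw [le_div_iff₀' (abs_pos.2 hc)]
  exact heq.abs_mul_setIntegral_sq_fderiv_le hF hU hK hmono htop hbot hab
    (neg_le_self hA) (-A) A

end Flux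

theorem uy_tendsto_zero_uniformly_general {F : ℝ → ℝ} (hF : ContDiff ℝ 1 F) {a b c : ℝ}
    (hab : F a = F b) (hc : c ≠ 0) {u : ℝ → ℝ → ℝ} (hu : ContDiff ℝ 2 fun q : ℝ × ℝ => u q.1 q.2)
    (heq : ∀ x y, pdxx u x y + pdyy u x y + c * pdy u x y = deriv F (u x y))
    (hmono : ∀ x y, 0 ≤ pdy u x y) (htop : ∀ x, Tendsto (fun y => u x y) atTop (nhds b))
    (hbot : ∀ x, Tendsto (fun y => u x y) atBot (nhds a)) {M : ℝ}
    (hM : ∀ p, ‖iteratedFDeriv ℝ 2 (fun q : ℝ × ℝ => u q.1 q.2) p‖ ≤ M) :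
    Tendsto (fun p : ℝ × ℝ => pdy u p.1 p.2) (cocompact (ℝ × ℝ)) (nhds 0) := by
  simp only [pdxx_eq_fderiv_fderiv hu, pdyy_eq_fderiv_fderiv hu,
    pdy_eq_fderiv (hu.differentiable two_ne_zero)] at heq hmono ⊢
  have hwave : SolvesWaveEquation F c fun q : ℝ × ℝ => u q.1 q.2 := fun p => heq p.1 p.2
  have hK := lipschitzWith_fderiv_of_norm_iteratedFDeriv_two_le hu hM
  have hL2 := hwave.memLp_two_fderiv_apply hc hF hu hK (fun p => hmono p.1 p.2) htop hbot hab
  have huc : UniformContinuous fun p => fderiv ℝ (fun q : ℝ × ℝ => u q.1 q.2) p (0, 1) :=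
    (ContinuousLinearMap.apply ℝ ℝ ((0, 1) : ℝ × ℝ)).uniformContinuous.comp hK.uniformContinuous
  exact tendsto_cocompact_zero_of_uniformContinuous_of_memLp huc hL2 two_ne_zero
    ENNReal.ofNat_ne_top

/-- `uᵧ → 0` uniformly in `y` as `|x| → ∞` (used in the proof of Lemma 2.2). -/
theorem uy_tendsto_zero_uniformly
    (F : ℝ → ℝ) (hF : BalancedDoubleWell F) (c : ℝ) (hc : 0 < c)
    (u : ℝ → ℝ → ℝ) (hu : IsTravelingWave F c u)
    (hbd : ∀ i : ℕ, i ≤ 3 → ∃ M : ℝ,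
      ∀ p : ℝ × ℝ, ‖iteratedFDeriv ℝ i (fun q : ℝ × ℝ => u q.1 q.2) p‖ ≤ M) :
    ∀ ε > (0 : ℝ), ∃ R > (0 : ℝ), ∀ x y : ℝ, R ≤ |x| → |pdy u x y| < ε := by
  obtain ⟨⟨hu3, heq, -, hmono⟩, htop, hbot⟩ := hu
  obtain ⟨M, hM⟩ := hbd 2 (by norm_num)
  obtain ⟨hF3, -, -, -, -, -, -, hFbot, hFtop⟩ := hF
  exact exists_forall_norm_lt_of_tendsto_cocompact_prod <| uy_tendsto_zero_uniformly_general
    (hF3.of_le (by norm_num)) (hFbot.trans hFtop.symm) hc.ne' (hu3.of_le (by norm_num)) heq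
    (fun x y => (hmono x y).le) htop hbot hM
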